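/- Let π_i and π_j be two stationary policies for a finite MDP with reward bounded by r_max and discount factor γ ∈ [0,1). Then the absolute difference of their expected discounted returns satisfies |J(π_i) − J(π_j)| ≤ (2 r_max / (1 − γ)²) · max_{s ∈ S} D_TV(π_i(·|s), π_j(·|s)). -/

import Mathlib

/-! Subtracting the two Bellman equations gives
`V s - V' s = ∑ a, (π s a - π' s a) Q' s a + γ ∑ a, π s a ∑ s', P s a s' (V s' - V' s')`,
where `Q'` is the action-value function of `π'`. In the supremum norm the first term is at most
`2 max_s D_TV(π s, π' s) ‖Q'‖`, with `‖Q'‖ ≤ ‖r‖ / (1 - γ)`, and the second is at most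
`γ ‖V - V'‖`, which is absorbed into the left-hand side at the cost of another factor
`1 / (1 - γ)`. -/

section WeightedSums

variable {ι E : Type*} [Fintype ι] [SeminormedAddCommGroup E] [NormedSpace ℝ E]

theorem norm_sum_smul_le_sum_abs_mul_norm (w : ι → ℝ) (f : ι → E) :
    ‖∑ i, w i • f i‖ ≤ (∑ i, |w i|) * ‖f‖ := by
  rw [Finset.sum_mul]
  refine norm_sum_le_of_le _ fun i _ => ?_
  rw [norm_smul, Real.norm_eq_abs]
  exact mul_le_mul_of_nonneg_left (norm_le_pi_norm f i) (abs_nonneg _)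

theorem norm_sum_smul_le_norm {w : ι → ℝ} (hw : ∑ i, |w i| ≤ 1) (f : ι → E) :
    ‖∑ i, w i • f i‖ ≤ ‖f‖ :=
  (norm_sum_smul_le_sum_abs_mul_norm w f).trans (mul_le_of_le_one_left (norm_nonneg f) hw)

theorem sum_abs_le_one_of_mem_stdSimplex {w : ι → ℝ} (hw : w ∈ stdSimplex ℝ ι) :
    ∑ i, |w i| ≤ 1 := by
  simp only [abs_of_nonneg (hw.1 _), hw.2, le_refl]

end WeightedSums

theorem le_div_one_sub_of_le_add_mul_self {𝕜 : Type*} [Field 𝕜] [LinearOrder 𝕜]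
    [IsStrictOrderedRing 𝕜] {x c γ : 𝕜} (hγ : γ < 1) (h : x ≤ c + γ * x) : x ≤ c / (1 - γ) := by
  rw [le_div_iff₀ (sub_pos.2 hγ)]
  linarith

section TotalVariation

variable {S A : Type*} [Fintype S] [Nonempty S] [Fintype A]

/-- The total variation distance of two weight functions on a finite type, as half their
`ℓ¹` distance. -/
noncomputable def tvDist (p q : A → ℝ) : ℝ :=
  1 / 2 * ∑ a, |p a - q a|

/-- The distance `max_s D_TV(π(·|s), π'(·|s))` between two policies. -/
noncomputable def maxTVDist (π π' : S → A → ℝ) : ℝ :=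
  Finset.univ.sup' Finset.univ_nonempty fun s => tvDist (π s) (π' s)

theorem tvDist_nonneg (p q : A → ℝ) : 0 ≤ tvDist p q := by
  unfold tvDist
  positivity

theorem tvDist_le_maxTVDist (π π' : S → A → ℝ) (s : S) :
    tvDist (π s) (π' s) ≤ maxTVDist π π' :=
  Finset.le_sup' (fun s => tvDist (π s) (π' s)) (Finset.mem_univ s)

theorem maxTVDist_nonneg (π π' : S → A → ℝ) : 0 ≤ maxTVDist π π' :=
  (tvDist_nonneg _ _).trans (tvDist_le_maxTVDist π π' (Classical.arbitrary S))

theorem norm_sum_sub_smul_le_two_mul_tvDist_mul_norm {E : Type*} [SeminormedAddCommGroup E]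
    [NormedSpace ℝ E] (p q : A → ℝ) (f : A → E) :
    ‖∑ a, (p a - q a) • f a‖ ≤ 2 * tvDist p q * ‖f‖ := by
  have two_mul_tvDist : 2 * tvDist p q = ∑ a, |p a - q a| := by
    unfold tvDist
    ring
  rw [two_mul_tvDist]
  exact norm_sum_smul_le_sum_abs_mul_norm (fun a => p a - q a) f

end TotalVariation

section ValueFunctions

variable {S A E : Type*} [Fintype S] [SeminormedAddCommGroup E] [NormedSpace ℝ E]
  {P : S → A → S → ℝ} {r : S → A → E} {γ : ℝ} {V V' : S → E}

/-- The one-step lookahead `r(s,a) + γ ∑_{s'} P(s'|s,a) V(s')`, which is the action-value function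
of a policy when `V` is its value function. Rewards may be vectors; if the weights `P s a` sum to
less than `1`, the missing mass is the probability of terminating with no further reward. -/
def qValue (P : S → A → S → ℝ) (r : S → A → E) (γ : ℝ) (V : S → E) (s : S) (a : A) : E :=
  r s a + γ • ∑ s', P s a s' • V s'

theorem qValue_sub_qValue (s : S) (a : A) :
    qValue P r γ V s a - qValue P r γ V' s a = qValue P 0 γ (V - V') s a := by
  simp only [qValue, Pi.zero_apply, Pi.sub_apply, smul_sub, Finset.sum_sub_distrib]
  abel

variable [Fintype A] {π π' : S → A → ℝ}

theorem norm_qValue_le (hP : ∀ s a, ∑ s', |P s a s'| ≤ 1) (hγ : 0 ≤ γ) :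
    ‖qValue P r γ V‖ ≤ ‖r‖ + γ * ‖V‖ := by
  have bound_nonneg : 0 ≤ ‖r‖ + γ * ‖V‖ := by positivity
  refine (pi_norm_le_iff_of_nonneg bound_nonneg).2 fun s =>
    (pi_norm_le_iff_of_nonneg bound_nonneg).2 fun a => norm_add_le_of_le ?_ ?_
  · exact (norm_le_pi_norm (r s) a).trans (norm_le_pi_norm r s)
  · rw [norm_smul, Real.norm_of_nonneg hγ]
    exact mul_le_mul_of_nonneg_left (norm_sum_smul_le_norm (hP s a) V) hγ

/-- The Bellman equation, characterising `V` as the value function of the policy `π`. -/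
def IsValueFunction (P : S → A → S → ℝ) (r : S → A → E) (γ : ℝ) (π : S → A → ℝ)
    (V : S → E) : Prop :=
  ∀ s, V s = ∑ a, π s a • qValue P r γ V s a

namespace IsValueFunction

theorem norm_le_norm_qValue (hV : IsValueFunction P r γ π V) (hπ : ∀ s, ∑ a, |π s a| ≤ 1) :
    ‖V‖ ≤ ‖qValue P r γ V‖ := by
  refine (pi_norm_le_iff_of_nonneg (norm_nonneg _)).2 fun s => ?_
  rw [hV s]
  exact (norm_sum_smul_le_norm (hπ s) _).trans (norm_le_pi_norm (qValue P r γ V) s)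

theorem norm_qValue_le_div (hV : IsValueFunction P r γ π V) (hP : ∀ s a, ∑ s', |P s a s'| ≤ 1)
    (hπ : ∀ s, ∑ a, |π s a| ≤ 1) (hγ0 : 0 ≤ γ) (hγ1 : γ < 1) :
    ‖qValue P r γ V‖ ≤ ‖r‖ / (1 - γ) :=
  le_div_one_sub_of_le_add_mul_self hγ1 <| (norm_qValue_le hP hγ0).trans <| by
    gcongr
    exact hV.norm_le_norm_qValue hπ

theorem sub_apply_eq (hV : IsValueFunction P r γ π V) (hV' : IsValueFunction P r γ π' V')
    (s : S) :
    V s - V' s = ∑ a, (π s a - π' s a) • qValue P r γ V' s a +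
      ∑ a, π s a • qValue P 0 γ (V - V') s a := by
  rw [hV s, hV' s]
  simp only [← qValue_sub_qValue (r := r), sub_smul, smul_sub, Finset.sum_sub_distrib]
  abel

theorem norm_sub_le [Nonempty S] (hV : IsValueFunction P r γ π V)
    (hV' : IsValueFunction P r γ π' V') (hP : ∀ s a, ∑ s', |P s a s'| ≤ 1)
    (hπ : ∀ s, ∑ a, |π s a| ≤ 1) (hπ' : ∀ s, ∑ a, |π' s a| ≤ 1) (hγ0 : 0 ≤ γ) (hγ1 : γ < 1) :
    ‖V - V'‖ ≤ 2 * ‖r‖ / (1 - γ) ^ 2 * maxTVDist π π' := by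
  have policy_term (s : S) : ‖∑ a, (π s a - π' s a) • qValue P r γ V' s a‖ ≤
      2 * maxTVDist π π' * (‖r‖ / (1 - γ)) := by
    have := maxTVDist_nonneg π π'
    refine (norm_sum_sub_smul_le_two_mul_tvDist_mul_norm _ _ _).trans ?_
    gcongr
    · exact tvDist_le_maxTVDist π π' s
    · exact (norm_le_pi_norm _ s).trans (hV'.norm_qValue_le_div hP hπ' hγ0 hγ1)
  have propagation_term (s : S) : ‖∑ a, π s a • qValue P (0 : S → A → E) γ (V - V') s a‖ ≤
      γ * ‖V - V'‖ :=
    calc _ ≤ ‖qValue P (0 : S → A → E) γ (V - V') s‖ := norm_sum_smul_le_norm (hπ s) _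
      _ ≤ ‖qValue P (0 : S → A → E) γ (V - V')‖ := norm_le_pi_norm _ s
      _ ≤ γ * ‖V - V'‖ := by
        simpa only [norm_zero, zero_add] using norm_qValue_le (r := (0 : S → A → E)) hP hγ0
  have self_bound : ‖V - V'‖ ≤ 2 * maxTVDist π π' * (‖r‖ / (1 - γ)) + γ * ‖V - V'‖ := by
    refine (pi_norm_le_iff_of_nonempty _).2 fun s => ?_
    rw [Pi.sub_apply, hV.sub_apply_eq hV' s]
    exact norm_add_le_of_le (policy_term s) (propagation_term s)
  refine (le_div_one_sub_of_le_add_mul_self hγ1 self_bound).trans_eq ?_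
  field_simp

end IsValueFunction

theorem return_difference_bounded_by_policy_tv_general [Nonempty S] [Nonempty A]
    (hP : ∀ s a, ∑ s', |P s a s'| ≤ 1) {rmax : ℝ} (hr : ∀ s a, ‖r s a‖ ≤ rmax)
    (hγ0 : 0 ≤ γ) (hγ1 : γ < 1) (hπ : ∀ s, ∑ a, |π s a| ≤ 1) (hπ' : ∀ s, ∑ a, |π' s a| ≤ 1)
    (hV : IsValueFunction P r γ π V) (hV' : IsValueFunction P r γ π' V')
    {μ : S → ℝ} (hμ : ∑ s, |μ s| ≤ 1) :
    ‖∑ s, μ s • V s - ∑ s, μ s • V' s‖ ≤ 2 * rmax / (1 - γ) ^ 2 * maxTVDist π π' := by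
  have norm_r_le : ‖r‖ ≤ rmax :=
    (pi_norm_le_iff_of_nonempty _).2 fun s => (pi_norm_le_iff_of_nonempty _).2 (hr s)
  have := maxTVDist_nonneg π π'
  calc ‖∑ s, μ s • V s - ∑ s, μ s • V' s‖ = ‖∑ s, μ s • (V - V') s‖ := by
        simp only [Pi.sub_apply, smul_sub, Finset.sum_sub_distrib]
    _ ≤ ‖V - V'‖ := norm_sum_smul_le_norm hμ _
    _ ≤ 2 * ‖r‖ / (1 - γ) ^ 2 * maxTVDist π π' := hV.norm_sub_le hV' hP hπ hπ' hγ0 hγ1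
    _ ≤ 2 * rmax / (1 - γ) ^ 2 * maxTVDist π π' := by gcongr

end ValueFunctions

/-- For two stationary policies `πi`, `πj` of a finite MDP with rewards
bounded by `rmax` and discount factor `γ ∈ [0,1)`, the difference of expected
discounted returns `J(πi) = Σ_s μ s * V^{πi} s` satisfies
`|J(πi) − J(πj)| ≤ (2 rmax / (1 − γ)²) · max_s D_TV(πi(·|s), πj(·|s))`. -/
theorem return_difference_bounded_by_policy_tv
    {S A : Type*} [Fintype S] [Fintype A] [Nonempty S] [Nonempty A]
    (P : S → A → S → ℝ)
    (hP0 : ∀ s a s', 0 ≤ P s a s') (hP1 : ∀ s a, ∑ s', P s a s' = 1)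
    (r : S → A → ℝ) (rmax : ℝ) (hr : ∀ s a, |r s a| ≤ rmax)
    (γ : ℝ) (hγ0 : 0 ≤ γ) (hγ1 : γ < 1)
    (πi πj : S → A → ℝ)
    (hπi0 : ∀ s a, 0 ≤ πi s a) (hπi1 : ∀ s, ∑ a, πi s a = 1)
    (hπj0 : ∀ s a, 0 ≤ πj s a) (hπj1 : ∀ s, ∑ a, πj s a = 1)
    (Vi Vj : S → ℝ)
    (hVi : ∀ s, Vi s = ∑ a, πi s a * (r s a + γ * ∑ s', P s a s' * Vi s'))
    (hVj : ∀ s, Vj s = ∑ a, πj s a * (r s a + γ * ∑ s', P s a s' * Vj s'))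
    (μ : S → ℝ) (hμ0 : ∀ s, 0 ≤ μ s) (hμ1 : ∑ s, μ s = 1) :
    |(∑ s, μ s * Vi s) - ∑ s, μ s * Vj s| ≤
      (2 * rmax / (1 - γ) ^ 2) *
        Finset.univ.sup' Finset.univ_nonempty
          (fun s => (1 / 2 : ℝ) * ∑ a, |πi s a - πj s a|) :=
  return_difference_bounded_by_policy_tv_general
    (fun s a => sum_abs_le_one_of_mem_stdSimplex ⟨hP0 s a, hP1 s a⟩) hr hγ0 hγ1
    (fun s => sum_abs_le_one_of_mem_stdSimplex ⟨hπi0 s, hπi1 s⟩)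
    (fun s => sum_abs_le_one_of_mem_stdSimplex ⟨hπj0 s, hπj1 s⟩) hVi hVj
    (sum_abs_le_one_of_mem_stdSimplex ⟨hμ0, hμ1⟩)
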